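/- For n ≥ 4, the projective dimension of R/J_n equals n-2, where J_n is the Stanley-Reisner ideal of the n-cycle. -/

import Mathlib

/-- Cyclic adjacency of vertices `i, j` of the `n`-gon (labeled `0, …, n-1` in cyclic order). -/
def cycAdj (n : ℕ) (i j : Fin n) : Prop :=
  (i.val + 1) % n = j.val ∨ (j.val + 1) % n = i.val

/-- `p` is a diagonal of the convex `n`-gon: a pair of distinct non-adjacent vertices. -/
def IsDiagonal (n : ℕ) (p : Finset (Fin n)) : Prop :=
  ∃ i j : Fin n, i ≠ j ∧ ¬ cycAdj n i j ∧ p = {i, j}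

/-- Two chords of the convex `n`-gon cross (intersect in their interiors):
the endpoints interlace along the boundary. -/
def Cross (n : ℕ) (p q : Finset (Fin n)) : Prop :=
  ∃ a b c d : Fin n, a < c ∧ c < b ∧ b < d ∧
    ((p = {a, b} ∧ q = {c, d}) ∨ (p = {c, d} ∧ q = {a, b}))

/-- The Stanley–Reisner ideal `J n` of the `n`-cycle: the ideal of `K[x₀, …, x_{n-1}]`
generated by the monomials `xᵢxⱼ` over all diagonals `{i, j}` of the `n`-cycle. -/
noncomputable def cycleIdeal (n : ℕ) (K : Type) [Field K] :
    Ideal (MvPolynomial (Fin n) K) :=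
  Ideal.span {m | ∃ i j : Fin n, i ≠ j ∧ ¬ cycAdj n i j ∧
    m = MvPolynomial.X i * MvPolynomial.X j}

/-- A minimal free resolution of the `MvPolynomial (Fin n) K`-module `M`:
free modules `Fᵈ = Rᵇ⁽ᵈ⁾` with differentials `φ d : F^{d+1} → F^d`, an augmentation
`ε : F⁰ → M`, exactness, and minimality (all matrix entries of the differentials lie
in the maximal/irrelevant ideal, i.e. have zero constant coefficient). The rank `b d`
is then the `d`-th total Betti number `β_d(M)`. -/
structure MinimalFreeResolution (n : ℕ) (K : Type) [Field K]
    (M : Type) [AddCommGroup M] [Module (MvPolynomial (Fin n) K) M] where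
  b : ℕ → ℕ
  φ : ∀ d : ℕ, (Fin (b (d + 1)) →₀ MvPolynomial (Fin n) K) →ₗ[MvPolynomial (Fin n) K]
        (Fin (b d) →₀ MvPolynomial (Fin n) K)
  ε : (Fin (b 0) →₀ MvPolynomial (Fin n) K) →ₗ[MvPolynomial (Fin n) K] M
  surj : Function.Surjective ε
  exact_zero : LinearMap.ker ε = LinearMap.range (φ 0)
  exact_succ : ∀ d, LinearMap.ker (φ d) = LinearMap.range (φ (d + 1))
  minimal : ∀ d (i : Fin (b (d + 1))) (j : Fin (b d)),
    MvPolynomial.constantCoeff (φ d (Finsupp.single i 1) j) = 0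

/-!
`J_n` is the Stanley–Reisner ideal of the `n`-cycle, seen as a one-dimensional simplicial complex.
For every constructible complex whose facets have `d` of the `N` vertices, the Stanley–Reisner ring
has projective dimension `N - d`. Indeed, the ring of a simplex is the quotient by the regular
sequence of the missing variables; and if two such complexes are glued along a complex of dimension
one less, then in the Mayer–Vietoris sequence `0 → R/(I ∩ I') → R/I × R/I' → R/(I + I') → 0` the
middle term has projective dimension `N - d` and the last one `N - d + 1`, which forces `N - d` on
the first one. The cycle is constructible with `d = 2`: a path grows by edges that meet it in one
point, and the last edge meets it in two points.

Finally, the ranks of a minimal free resolution of `M` detect the projective dimension of `M`. By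
passing to syzygies this reduces to degree zero, where, for the irrelevant ideal `𝔪`, minimality
gives the Nakayama-type implication `𝔪 M = M → b 0 = 0` although `R` is not local.
-/

open CategoryTheory Abelian RingTheory.Sequence

universe u v w

section AbelianCategory

variable {C : Type u} [Category.{v} C] [Abelian C]

lemma projectiveDimension_eq_natCast_iff {X : C} {k : ℕ} :
    projectiveDimension X = k ↔ HasProjectiveDimensionLE X k ∧ ¬ HasProjectiveDimensionLT X k := by
  rw [← projectiveDimension_le_iff, ← projectiveDimension_ge_iff, le_antisymm_iff]

lemma projectiveDimension_X₁_eq_of_shortExact {S : ShortComplex C} (hS : S.ShortExact) {k : ℕ}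
    (h₂ : HasProjectiveDimensionLE S.X₂ k) (h₃ : projectiveDimension S.X₃ = (k + 1 : ℕ)) :
    projectiveDimension S.X₁ = k := by
  obtain ⟨h₃le, h₃lt⟩ := projectiveDimension_eq_natCast_iff.1 h₃
  exact projectiveDimension_eq_natCast_iff.2 ⟨hS.hasProjectiveDimensionLT_X₁ (k + 1) h₂ h₃le,
    fun h₁ ↦ h₃lt (hS.hasProjectiveDimensionLT_X₃ k h₁ h₂)⟩

end AbelianCategory

section MayerVietoris

variable {R : Type u} [Ring R] {M : Type v} [AddCommGroup M] [Module R M]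

/-- The Mayer–Vietoris sequence `M ⧸ N₁ ⊓ N₂ → (M ⧸ N₁) × (M ⧸ N₂) → M ⧸ N₁ ⊔ N₂` of two
submodules, with the difference of the two projections as second map. -/
def mayerVietoris (N₁ N₂ : Submodule R M) : ShortComplex (ModuleCat.{v} R) :=
  ModuleCat.shortComplexOfCompEqZero
    ((Submodule.factor (inf_le_left : N₁ ⊓ N₂ ≤ N₁)).prod (Submodule.factor inf_le_right))
    ((Submodule.factor le_sup_left).coprod (-Submodule.factor (le_sup_right : N₂ ≤ N₁ ⊔ N₂)))
    (Submodule.linearMap_qext _ (LinearMap.ext fun x ↦ by simp))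

lemma mayerVietoris_shortExact (N₁ N₂ : Submodule R M) : (mayerVietoris N₁ N₂).ShortExact where
  mono_f := by
    refine (ModuleCat.mono_iff_injective _).2 ((injective_iff_map_eq_zero _).2 fun x hx ↦ ?_)
    obtain ⟨x, rfl⟩ := Submodule.mkQ_surjective _ x
    obtain ⟨h₁, h₂⟩ := Prod.ext_iff.1 hx
    exact (Submodule.Quotient.mk_eq_zero _).2
      ⟨(Submodule.Quotient.mk_eq_zero _).1 h₁, (Submodule.Quotient.mk_eq_zero _).1 h₂⟩
  epi_g := by
    have h := Submodule.factor_surjective (le_sup_left : N₁ ≤ N₁ ⊔ N₂)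
    rw [← LinearMap.coprod_inl (Submodule.factor le_sup_left) (-Submodule.factor le_sup_right)] at h
    exact (ModuleCat.epi_iff_surjective _).2
      (Function.Surjective.of_comp (g := LinearMap.inl R (M ⧸ N₁) (M ⧸ N₂)) h)
  exact := by
    refine (ShortComplex.moduleCat_exact_iff _).2 ?_
    rintro ⟨x, y⟩ hxy
    obtain ⟨x, rfl⟩ := Submodule.mkQ_surjective _ x
    obtain ⟨y, rfl⟩ := Submodule.mkQ_surjective _ y
    have hmem : x - y ∈ N₁ ⊔ N₂ := by
      rw [← Submodule.Quotient.mk_eq_zero, Submodule.Quotient.mk_sub, sub_eq_add_neg]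
      exact hxy
    obtain ⟨a, ha, b, hb, hab⟩ := Submodule.mem_sup.1 hmem
    have hxa : x - a = y + b := by rw [sub_eq_iff_eq_add, add_assoc, add_comm b, hab]; abel
    refine ⟨Submodule.Quotient.mk (x - a), Prod.ext ((Submodule.Quotient.eq _).2 ?_)
      ((Submodule.Quotient.eq _).2 ?_)⟩
    · simpa using ha
    · simpa [hxa] using hb

lemma hasProjectiveDimensionLT_prod {N : Type v} [AddCommGroup N] [Module R N]
    {k : ℕ} [HasProjectiveDimensionLT (ModuleCat.of R M) k]
    [HasProjectiveDimensionLT (ModuleCat.of R N) k] :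
    HasProjectiveDimensionLT (ModuleCat.of R (M × N)) k :=
  hasProjectiveDimensionLT_of_iso (ModuleCat.biprodIsoProd (.of R M) (.of R N)) k

lemma projectiveDimension_quotient_inf {N₁ N₂ : Submodule R M} {k : ℕ}
    (h₁ : projectiveDimension (ModuleCat.of R (M ⧸ N₁)) = k)
    (h₂ : projectiveDimension (ModuleCat.of R (M ⧸ N₂)) = k)
    (h₁₂ : projectiveDimension (ModuleCat.of R (M ⧸ N₁ ⊔ N₂)) = (k + 1 : ℕ)) :
    projectiveDimension (ModuleCat.of R (M ⧸ N₁ ⊓ N₂)) = k := by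
  obtain ⟨_, -⟩ := projectiveDimension_eq_natCast_iff.1 h₁
  obtain ⟨_, -⟩ := projectiveDimension_eq_natCast_iff.1 h₂
  exact projectiveDimension_X₁_eq_of_shortExact (mayerVietoris_shortExact N₁ N₂)
    hasProjectiveDimensionLT_prod h₁₂

end MayerVietoris

section RegularSequence

variable {R : Type u} [CommRing R] {M N : ModuleCat.{v} R}

lemma mk₀_smul_id_comp_eq_zero [Small.{v} R] {x : R} (hN : x ∈ Module.annihilator R N) {k : ℕ}
    (e : Ext M N k) : (Ext.mk₀ (x • 𝟙 M)).comp e (zero_add k) = 0 := by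
  have hx : x • 𝟙 N = 0 := ModuleCat.hom_ext (LinearMap.ext (Module.mem_annihilator.1 hN))
  rw [Ext.mk₀_smul, Ext.smul_comp, Ext.mk₀_id_comp, Ext.smul_eq_comp_mk₀, hx, Ext.mk₀_zero,
    Ext.comp_zero]

lemma nontrivial_ext_quotSMulTop [Small.{v} R] {x : R} (hM : IsSMulRegular M x)
    (hN : x ∈ Module.annihilator R N) {k : ℕ} [Nontrivial (Ext M N k)] :
    Nontrivial (Ext (ModuleCat.of R (QuotSMulTop x M)) N (k + 1)) := by
  have hS := hM.smulShortComplex_shortExact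
  obtain ⟨e, he⟩ := exists_ne (0 : Ext M N k)
  refine ⟨hS.extClass.comp e (add_comm 1 k), 0, fun h ↦ he ?_⟩
  obtain ⟨e', rfl⟩ := Ext.contravariant_sequence_exact₁ hS N e (add_comm 1 k) h
  exact mk₀_smul_id_comp_eq_zero hN e'

lemma hasProjectiveDimensionLT_quotSMulTop {x : R} (hM : IsSMulRegular M x) {k : ℕ}
    [HasProjectiveDimensionLT M k] :
    HasProjectiveDimensionLT (ModuleCat.of R (QuotSMulTop x M)) (k + 1) :=
  hM.smulShortComplex_shortExact.hasProjectiveDimensionLT_X₃ k ‹_›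
    (hasProjectiveDimensionLT_of_ge M k (k + 1) k.le_succ)

lemma ofList_nil_smul_top (M : Type v) [AddCommGroup M] [Module R M] :
    Ideal.ofList ([] : List R) • (⊤ : Submodule R M) = ⊥ := by
  rw [Ideal.ofList_nil, Submodule.bot_smul]

lemma hasProjectiveDimensionLT_quotient_ofList_smul_top {rs : List R}
    (hM : IsWeaklyRegular M rs) {k : ℕ} [HasProjectiveDimensionLT M k] :
    HasProjectiveDimensionLT (ModuleCat.of R (M ⧸ Ideal.ofList rs • (⊤ : Submodule R M)))
      (k + rs.length) := by
  induction rs generalizing M k with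
  | nil =>
    exact hasProjectiveDimensionLT_of_iso
      (Submodule.quotEquivOfEqBot _ (ofList_nil_smul_top M)).symm.toModuleIso k
  | cons r rs ih =>
    obtain ⟨hr, hrs⟩ := (isWeaklyRegular_cons_iff M r rs).1 hM
    have := hasProjectiveDimensionLT_quotSMulTop hr (k := k)
    have := ih (M := ModuleCat.of R (QuotSMulTop r M)) hrs (k := k + 1)
    rw [List.length_cons, add_comm rs.length, ← add_assoc]
    exact hasProjectiveDimensionLT_of_iso
      (Submodule.quotOfListConsSMulTopEquivQuotSMulTopInner M r rs).symm.toModuleIso _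

lemma not_hasProjectiveDimensionLT_quotient_ofList_smul_top [Small.{v} R] {rs : List R}
    (hM : IsWeaklyRegular M rs) (hN : ∀ r ∈ rs, r ∈ Module.annihilator R N) {k : ℕ}
    [Nontrivial (Ext M N k)] :
    ¬ HasProjectiveDimensionLT (ModuleCat.of R (M ⧸ Ideal.ofList rs • (⊤ : Submodule R M)))
      (k + rs.length) := by
  induction rs generalizing M k with
  | nil =>
    intro h
    have : HasProjectiveDimensionLT M k := hasProjectiveDimensionLT_of_iso
      (Submodule.quotEquivOfEqBot _ (ofList_nil_smul_top M)).toModuleIso k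
    exact not_subsingleton (Ext M N k) (HasProjectiveDimensionLT.subsingleton M k k le_rfl N)
  | cons r rs ih =>
    obtain ⟨hr, hrs⟩ := (isWeaklyRegular_cons_iff M r rs).1 hM
    obtain ⟨hrN, hrsN⟩ := List.forall_mem_cons.1 hN
    have := nontrivial_ext_quotSMulTop hr hrN (k := k)
    intro h
    rw [List.length_cons, add_comm rs.length, ← add_assoc] at h
    exact ih (M := ModuleCat.of R (QuotSMulTop r M)) hrs hrsN (hasProjectiveDimensionLT_of_iso
      (Submodule.quotOfListConsSMulTopEquivQuotSMulTopInner M r rs).toModuleIso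
      (k + 1 + rs.length))

lemma nontrivial_ext_self_zero (N : ModuleCat.{u} R) [Nontrivial N] :
    Nontrivial (Ext (ModuleCat.of R R) N 0) :=
  (Ext.homEquiv₀.trans
    (ModuleCat.homEquiv.trans (LinearMap.ringLmapEquivSelf R R N).toEquiv)).nontrivial

theorem projectiveDimension_quotient_ofList_of_isRegular {rs : List R} (h : IsRegular R rs) :
    projectiveDimension (ModuleCat.of R (R ⧸ Ideal.ofList rs)) = rs.length := by
  have hN : ∀ r ∈ rs, r ∈ Module.annihilator R (R ⧸ Ideal.ofList rs) := fun r hr ↦ by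
    rw [Ideal.annihilator_quotient]
    exact Ideal.subset_span hr
  have : Nontrivial (R ⧸ Ideal.ofList rs) := by
    have := h.quot_ofList_smul_nontrivial ⊤
    rwa [smul_eq_mul, Ideal.mul_top] at this
  have := nontrivial_ext_self_zero (ModuleCat.of R (R ⧸ Ideal.ofList rs))
  have hle := hasProjectiveDimensionLT_quotient_ofList_smul_top (M := ModuleCat.of R R)
    h.toIsWeaklyRegular (k := 1)
  have hlt := not_hasProjectiveDimensionLT_quotient_ofList_smul_top (M := ModuleCat.of R R)
    (N := ModuleCat.of R (R ⧸ Ideal.ofList rs)) h.toIsWeaklyRegular hN (k := 0)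
  rw [smul_eq_mul, Ideal.mul_top, add_comm] at hle
  rw [smul_eq_mul, Ideal.mul_top, zero_add] at hlt
  exact projectiveDimension_eq_natCast_iff.2 ⟨hle, hlt⟩

end RegularSequence

section Variables

open MvPolynomial

variable {σ : Type u} {K : Type v} [CommRing K]

lemma ofList_map_X (l : List σ) :
    Ideal.ofList (l.map (X : σ → MvPolynomial σ K)) = Ideal.span (X '' {i | i ∈ l}) := by
  rw [Ideal.ofList]
  congr 1
  ext p
  simp

lemma isSMulRegular_X_quotient_span_X_image {s : Set σ} {a : σ} (ha : a ∉ s) :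
    IsSMulRegular (MvPolynomial σ K ⧸ Ideal.span ((X : σ → MvPolynomial σ K) '' s))
      (X a : MvPolynomial σ K) := by
  classical
  refine (isSMulRegular_quotient_iff_mem_of_smul_mem _ _).2 fun f hf ↦ ?_
  rw [smul_eq_mul, mem_ideal_span_X_image] at hf
  refine mem_ideal_span_X_image.2 fun m hm ↦ ?_
  obtain ⟨i, hi, hmi⟩ := hf (Finsupp.single a 1 + m) (by rwa [mem_support_iff, coeff_X_mul,
    ← mem_support_iff])
  exact ⟨i, hi, by simpa [Finsupp.single_eq_of_ne (ne_of_mem_of_not_mem hi ha)] using hmi⟩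

lemma isRegular_map_X [Nontrivial K] {l : List σ} (hl : l.Nodup) :
    IsRegular (MvPolynomial σ K) (l.map (X : σ → MvPolynomial σ K)) where
  regular_mod_prev i hi := by
    rw [← List.map_take, ofList_map_X, smul_eq_mul, Ideal.mul_top, List.getElem_map]
    exact isSMulRegular_X_quotient_span_X_image fun h ↦ by
      obtain ⟨j, hj, hij⟩ := List.mem_take_iff_getElem.1 h
      rw [hl.getElem_inj_iff] at hij
      omega
  top_ne_smul h := by
    rw [ofList_map_X, smul_eq_mul, Ideal.mul_top, eq_comm, Ideal.eq_top_iff_one,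
      mem_ideal_span_X_image] at h
    obtain ⟨i, -, hi⟩ := h 0 (by simp)
    exact hi rfl

theorem projectiveDimension_quotient_span_X_image [Nontrivial K] (s : Finset σ) :
    projectiveDimension (ModuleCat.of (MvPolynomial σ K)
      (MvPolynomial σ K ⧸ Ideal.span ((X : σ → MvPolynomial σ K) '' s))) = s.card := by
  have h := projectiveDimension_quotient_ofList_of_isRegular
    (isRegular_map_X (K := K) s.nodup_toList)
  rwa [ofList_map_X, List.length_map, Finset.length_toList,
    show {i | i ∈ s.toList} = (s : Set σ) from Set.ext fun _ ↦ Finset.mem_toList] at h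

end Variables

section StanleyReisner

open MvPolynomial

variable {σ : Type u} (K : Type v) [CommRing K]

/-- The Stanley–Reisner ideal of a simplicial complex `Δ`, spanned by the monomials whose support
is not a face. A complex is encoded as a lower set of finsets. -/
noncomputable def stanleyReisnerIdeal (Δ : LowerSet (Finset σ)) : Ideal (MvPolynomial σ K) :=
  restrictSupportIdeal K {m | m.support ∉ Δ} fun _ _ hle hm h ↦
    hm (Δ.lower (Finsupp.support_mono hle) h)

variable {K}

lemma mem_stanleyReisnerIdeal {Δ : LowerSet (Finset σ)} {f : MvPolynomial σ K} :
    f ∈ stanleyReisnerIdeal K Δ ↔ ∀ m ∈ f.support, m.support ∉ Δ :=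
  Iff.rfl

lemma monomial_mem_stanleyReisnerIdeal {Δ : LowerSet (Finset σ)} {m : σ →₀ ℕ}
    (hm : m.support ∉ Δ) (c : K) : monomial m c ∈ stanleyReisnerIdeal K Δ :=
  mem_stanleyReisnerIdeal.2 fun _ hm' ↦ by
    rwa [Finset.mem_singleton.1 (support_monomial_subset hm')]

lemma stanleyReisnerIdeal_le_iff {Δ : LowerSet (Finset σ)} {I : Ideal (MvPolynomial σ K)} :
    stanleyReisnerIdeal K Δ ≤ I ↔ ∀ m : σ →₀ ℕ, m.support ∉ Δ → monomial m 1 ∈ I := by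
  refine ⟨fun h m hm ↦ h (monomial_mem_stanleyReisnerIdeal hm 1), fun h f hf ↦ ?_⟩
  rw [f.as_sum]
  refine Ideal.sum_mem _ fun m hm ↦ ?_
  rw [← mul_one (coeff m f), ← C_mul_monomial]
  exact Ideal.mul_mem_left _ _ (h m (mem_stanleyReisnerIdeal.1 hf m hm))

lemma stanleyReisnerIdeal_antitone : Antitone (stanleyReisnerIdeal (σ := σ) K) :=
  fun _ _ h _ hf ↦ mem_stanleyReisnerIdeal.2 fun m hm hΔ ↦
    mem_stanleyReisnerIdeal.1 hf m hm (h hΔ)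

lemma stanleyReisnerIdeal_sup (Δ Γ : LowerSet (Finset σ)) :
    stanleyReisnerIdeal K (Δ ⊔ Γ) = stanleyReisnerIdeal K Δ ⊓ stanleyReisnerIdeal K Γ := by
  ext f
  simp only [Submodule.mem_inf, mem_stanleyReisnerIdeal, LowerSet.mem_sup_iff, not_or,
    forall₂_and]

lemma stanleyReisnerIdeal_inf (Δ Γ : LowerSet (Finset σ)) :
    stanleyReisnerIdeal K (Δ ⊓ Γ) = stanleyReisnerIdeal K Δ ⊔ stanleyReisnerIdeal K Γ := by
  refine le_antisymm (stanleyReisnerIdeal_le_iff.2 fun m hm ↦ ?_)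
    (sup_le (stanleyReisnerIdeal_antitone inf_le_left)
      (stanleyReisnerIdeal_antitone inf_le_right))
  rw [LowerSet.mem_inf_iff, not_and_or] at hm
  exact hm.elim (fun h ↦ Ideal.mem_sup_left (monomial_mem_stanleyReisnerIdeal h 1))
    fun h ↦ Ideal.mem_sup_right (monomial_mem_stanleyReisnerIdeal h 1)

lemma stanleyReisnerIdeal_Iic (s : Finset σ) :
    stanleyReisnerIdeal K (LowerSet.Iic s) = Ideal.span (X '' {i | i ∉ s}) := by
  ext f
  rw [mem_stanleyReisnerIdeal, mem_ideal_span_X_image]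
  simp [Finset.not_subset, and_comm]

lemma projectiveDimension_quotient_stanleyReisnerIdeal_Iic [Nontrivial K] [Fintype σ]
    {s : Finset σ} {k : ℕ} (hk : s.card + k = Fintype.card σ) :
    projectiveDimension (ModuleCat.of (MvPolynomial σ K)
      (MvPolynomial σ K ⧸ stanleyReisnerIdeal K (LowerSet.Iic s))) = k := by
  classical
  have h := projectiveDimension_quotient_span_X_image (K := K) sᶜ
  rwa [show (↑sᶜ : Set σ) = {i | i ∉ s} by simp [Set.compl_def], ← stanleyReisnerIdeal_Iic,
    Finset.card_compl, ← hk, Nat.add_sub_cancel_left] at h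

/-- The simplicial complex of the finite sets of pairwise `r`-related vertices. -/
def cliqueComplex (r : σ → σ → Prop) : LowerSet (Finset σ) where
  carrier := {s | (s : Set σ).Pairwise r}
  lower' _ _ h hs := hs.mono h

lemma mem_cliqueComplex {r : σ → σ → Prop} {s : Finset σ} :
    s ∈ cliqueComplex r ↔ (s : Set σ).Pairwise r :=
  Iff.rfl

lemma span_X_mul_X_eq_stanleyReisnerIdeal (r : σ → σ → Prop) :
    Ideal.span {m : MvPolynomial σ K | ∃ i j, i ≠ j ∧ ¬ r i j ∧ m = X i * X j} =
      stanleyReisnerIdeal K (cliqueComplex r) := by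
  apply le_antisymm
  · rw [Ideal.span_le]
    rintro _ ⟨i, j, hij, hr, rfl⟩
    rw [X, X, monomial_mul]
    refine monomial_mem_stanleyReisnerIdeal (fun h ↦ hr (mem_cliqueComplex.1 h ?_ ?_ hij)) _ <;>
      simp
  · refine stanleyReisnerIdeal_le_iff.2 fun m hm ↦ ?_
    obtain ⟨i, hi, j, hj, hij, hr⟩ : ∃ i ∈ m.support, ∃ j ∈ m.support, i ≠ j ∧ ¬ r i j := by
      simpa [mem_cliqueComplex, Set.Pairwise] using hm
    have hle : Finsupp.single i 1 + Finsupp.single j 1 ≤ m := by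
      rw [Finsupp.mem_support_iff] at hi hj
      refine (le_tsub_iff_left (Finsupp.single_le_iff.2 (by omega))).1 (Finsupp.single_le_iff.2 ?_)
      rw [Finsupp.tsub_apply, Finsupp.single_eq_of_ne hij.symm]
      omega
    have hdvd : (X i * X j : MvPolynomial σ K) ∣ monomial m 1 := by
      rw [X, X, monomial_mul, one_mul]
      exact monomial_dvd_monomial.2 ⟨Or.inr hle, dvd_rfl⟩
    exact Ideal.mem_of_dvd _ hdvd (Ideal.subset_span ⟨i, j, hij, hr, rfl⟩)

end StanleyReisner

section Constructible

variable {σ : Type u}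

/-- A constructible simplicial complex whose facets have `d` vertices, i.e. of dimension `d - 1`.
The empty simplex, with `d = 0`, is allowed. -/
inductive IsConstructible : ℕ → LowerSet (Finset σ) → Prop
  | simplex (s : Finset σ) : IsConstructible s.card (LowerSet.Iic s)
  | union {d : ℕ} {Δ Γ : LowerSet (Finset σ)} (hΔ : IsConstructible (d + 1) Δ)
      (hΓ : IsConstructible (d + 1) Γ) (hΔΓ : IsConstructible d (Δ ⊓ Γ)) :
      IsConstructible (d + 1) (Δ ⊔ Γ)

lemma isConstructible_singleton (a : σ) : IsConstructible 1 (LowerSet.Iic {a}) :=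
  .simplex {a}

lemma isConstructible_pair [DecidableEq σ] {a b : σ} (h : a ≠ b) :
    IsConstructible 2 (LowerSet.Iic {a, b}) :=
  Finset.card_pair h ▸ .simplex {a, b}

lemma isConstructible_singleton_sup_singleton {a b : σ} (h : a ≠ b) :
    IsConstructible 1 (LowerSet.Iic {a} ⊔ LowerSet.Iic {b}) := by
  classical
  refine .union (isConstructible_singleton a) (isConstructible_singleton b) ?_
  rw [← LowerSet.Iic_inf, Finset.inf_eq_inter,
    Finset.disjoint_iff_inter_eq_empty.1 (Finset.disjoint_singleton.2 h)]
  exact .simplex ∅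

open MvPolynomial in
theorem projectiveDimension_quotient_of_isConstructible [Fintype σ] {K : Type v} [CommRing K]
    [Nontrivial K] {Δ : LowerSet (Finset σ)} {d k : ℕ} (hΔ : IsConstructible d Δ)
    (hk : d + k = Fintype.card σ) :
    projectiveDimension (ModuleCat.of (MvPolynomial σ K)
      (MvPolynomial σ K ⧸ stanleyReisnerIdeal K Δ)) = k := by
  induction hΔ generalizing k with
  | simplex s => exact projectiveDimension_quotient_stanleyReisnerIdeal_Iic hk
  | union _ _ _ ihΔ ihΓ ihΔΓ =>
    rw [stanleyReisnerIdeal_sup]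
    refine projectiveDimension_quotient_inf (ihΔ hk) (ihΓ hk) ?_
    rw [← stanleyReisnerIdeal_inf]
    exact ihΔΓ (by omega)

end Constructible

section Walk

variable {σ : Type u} [DecidableEq σ] {v : ℕ → σ} {k : ℕ}

/-- The graph, as a simplicial complex, traversed by the first `k` steps of the walk
`v 0, v 1, v 2, …`. -/
def walkComplex (v : ℕ → σ) (k : ℕ) : LowerSet (Finset σ) :=
  ⨆ i < k, LowerSet.Iic {v i, v (i + 1)}

lemma mem_walkComplex {s : Finset σ} :
    s ∈ walkComplex v k ↔ ∃ i < k, s ⊆ {v i, v (i + 1)} := by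
  simp [walkComplex]

lemma walkComplex_succ (v : ℕ → σ) (k : ℕ) :
    walkComplex v (k + 1) = walkComplex v k ⊔ LowerSet.Iic {v k, v (k + 1)} :=
  Nat.iSup_lt_succ _ k

lemma walkComplex_inf_Iic_of_injOn (hk : 1 ≤ k) (hv : Set.InjOn v (Set.Iic (k + 1))) :
    walkComplex v k ⊓ LowerSet.Iic {v k, v (k + 1)} = LowerSet.Iic {v k} := by
  refine SetLike.ext fun s ↦ ?_
  simp only [LowerSet.mem_inf_iff, mem_walkComplex, LowerSet.mem_Iic_iff]
  constructor
  · rintro ⟨⟨i, hi, hsi⟩, hsk⟩ x hx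
    have hvi : v (k + 1) ≠ v i := hv.ne (by simp) (by simp; omega) (by omega)
    have hvi' : v (k + 1) ≠ v (i + 1) := hv.ne (by simp) (by simp; omega) (by omega)
    have := hsi hx
    have := hsk hx
    grind
  · intro hs
    refine ⟨⟨k - 1, by omega, hs.trans ?_⟩, hs.trans (by simp)⟩
    simp [Nat.sub_add_cancel hk]

lemma isConstructible_walkComplex (hk : 1 ≤ k) (hv : Set.InjOn v (Set.Iic k)) :
    IsConstructible 2 (walkComplex v k) := by
  induction k, hk using Nat.le_induction with
  | base =>
    simpa [walkComplex] using isConstructible_pair (hv.ne (by simp) (by simp) zero_ne_one)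
  | succ k hk ih =>
    rw [walkComplex_succ]
    refine .union (ih (hv.mono (Set.Iic_subset_Iic.2 k.le_succ)))
      (isConstructible_pair (hv.ne (by simp) (by simp) k.succ_ne_self.symm)) ?_
    rw [walkComplex_inf_Iic_of_injOn hk hv]
    exact isConstructible_singleton (v k)

lemma walkComplex_inf_Iic_of_closed (hk : 2 ≤ k) (hv : Set.InjOn v (Set.Iic k)) :
    walkComplex v k ⊓ LowerSet.Iic {v k, v 0} = LowerSet.Iic {v 0} ⊔ LowerSet.Iic {v k} := by
  refine SetLike.ext fun s ↦ ?_
  simp only [LowerSet.mem_inf_iff, LowerSet.mem_sup_iff, mem_walkComplex, LowerSet.mem_Iic_iff]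
  constructor
  · rintro ⟨⟨i, hi, hsi⟩, hsk⟩
    rcases eq_or_ne i 0 with rfl | hi0
    · have hv1 : v k ≠ v 1 := hv.ne (by simp) (by simp; omega) (by omega)
      left
      grind
    · have hv0 : v 0 ≠ v i := hv.ne (by simp) (by simp; omega) (by omega)
      have hv1 : v 0 ≠ v (i + 1) := hv.ne (by simp) (by simp; omega) (by omega)
      right
      grind
  · rintro (hs | hs)
    · exact ⟨⟨0, by omega, hs.trans (by simp)⟩, hs.trans (by simp)⟩
    · refine ⟨⟨k - 1, by omega, hs.trans ?_⟩, hs.trans (by simp)⟩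
      simp [Nat.sub_add_cancel (by omega : 1 ≤ k)]

theorem isConstructible_walkComplex_of_closed (hk : 2 ≤ k) (hv : Set.InjOn v (Set.Iic k))
    (hclosed : v (k + 1) = v 0) : IsConstructible 2 (walkComplex v (k + 1)) := by
  have hne : v 0 ≠ v k := hv.ne (by simp) (by simp) (by omega)
  rw [walkComplex_succ, hclosed]
  refine .union (isConstructible_walkComplex (by omega) hv) (isConstructible_pair hne.symm) ?_
  rw [walkComplex_inf_Iic_of_closed hk hv]
  exact isConstructible_singleton_sup_singleton hne

end Walk

section Cycle

variable {n : ℕ} [NeZero n]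

lemma cycAdj_iff {i j : Fin n} : cycAdj n i j ↔ i + 1 = j ∨ j + 1 = i := by
  simp [cycAdj, Fin.ext_iff, Fin.val_add]

lemma exists_subset_pair_of_pairwise_cycAdj (hn : 4 ≤ n) {s : Finset (Fin n)}
    (hs : (s : Set (Fin n)).Pairwise (cycAdj n)) : ∃ i : Fin n, s ⊆ {i, i + 1} := by
  have three_ne (i : Fin n) : i + 1 + 1 + 1 ≠ i := by
    rw [add_assoc, add_assoc, Ne, add_eq_left, Fin.ext_iff]
    simp [Fin.val_add, Nat.mod_eq_of_lt (by omega : 3 < n)]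
  obtain rfl | ⟨a, ha⟩ := s.eq_empty_or_nonempty
  · exact ⟨0, Finset.empty_subset _⟩
  by_contra! h
  obtain ⟨b, hb, hab⟩ := Finset.not_subset.1 (h a)
  obtain ⟨c, hc, hbc⟩ := Finset.not_subset.1 (h b)
  have h₁ := hs ha hb
  have h₂ := hs hb hc
  have h₃ := hs ha hc
  simp only [cycAdj_iff] at h₁ h₂ h₃
  grind

lemma mem_walkComplex_ofNat {s : Finset (Fin n)} :
    s ∈ walkComplex (Fin.ofNat n) n ↔ ∃ i : Fin n, s ⊆ {i, i + 1} := by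
  have hsucc (i : ℕ) : Fin.ofNat n (i + 1) = Fin.ofNat n i + 1 := by
    simp [Fin.ext_iff, Fin.val_add]
  simp only [mem_walkComplex, hsucc]
  constructor
  · rintro ⟨i, -, h⟩
    exact ⟨Fin.ofNat n i, h⟩
  · rintro ⟨i, h⟩
    exact ⟨i, i.isLt, by rwa [Fin.ofNat_val_eq_self]⟩

lemma cliqueComplex_cycAdj (hn : 4 ≤ n) :
    cliqueComplex (cycAdj n) = walkComplex (Fin.ofNat n) n := by
  refine SetLike.ext fun s ↦ ?_
  rw [mem_cliqueComplex, mem_walkComplex_ofNat]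
  refine ⟨exists_subset_pair_of_pairwise_cycAdj hn, fun ⟨i, hi⟩ a ha b hb hab ↦ ?_⟩
  rw [cycAdj_iff]
  have := hi ha
  have := hi hb
  grind

theorem isConstructible_cliqueComplex_cycAdj (hn : 4 ≤ n) :
    IsConstructible 2 (cliqueComplex (cycAdj n)) := by
  have hinj : Set.InjOn (Fin.ofNat n) (Set.Iic (n - 1)) := fun i hi j hj hij ↦ by
    rw [Set.mem_Iic] at hi hj
    simpa [Nat.mod_eq_of_lt (by omega : i < n), Nat.mod_eq_of_lt (by omega : j < n)] using
      congrArg Fin.val hij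
  have hsub : n - 1 + 1 = n := by omega
  have h := isConstructible_walkComplex_of_closed (by omega) hinj (by simp [hsub])
  rwa [hsub, ← cliqueComplex_cycAdj hn] at h

end Cycle

section CycleIdeal

variable {n : ℕ} {K : Type} [Field K]

theorem projectiveDimension_quotient_cycleIdeal (hn : 4 ≤ n) :
    projectiveDimension (ModuleCat.of (MvPolynomial (Fin n) K)
      (MvPolynomial (Fin n) K ⧸ cycleIdeal n K)) = (n - 2 : ℕ) := by
  have : NeZero n := ⟨by omega⟩
  have hideal : cycleIdeal n K = stanleyReisnerIdeal K (cliqueComplex (cycAdj n)) :=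
    span_X_mul_X_eq_stanleyReisnerIdeal (cycAdj n)
  rw [hideal]
  refine projectiveDimension_quotient_of_isConstructible
    (isConstructible_cliqueComplex_cycAdj hn) ?_
  rw [Fintype.card_fin]
  omega

end CycleIdeal

section Retraction

variable {R : Type u} [CommRing R] {M : Type v} {N : Type w} [AddCommGroup M] [Module R M]
  [AddCommGroup N] [Module R N] {I : Ideal R} {p : M →ₗ[R] N}

lemma smul_top_eq_top_of_ker_le (hp : Function.Surjective p)
    (hker : LinearMap.ker p ≤ I • (⊤ : Submodule R M)) (hN : I • (⊤ : Submodule R N) = ⊤) :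
    I • (⊤ : Submodule R M) = ⊤ :=
  calc I • (⊤ : Submodule R M)
      = (I • (⊤ : Submodule R M)) ⊔ LinearMap.ker p := (sup_of_le_left hker).symm
    _ = ((I • (⊤ : Submodule R M)).map p).comap p := (Submodule.comap_map_eq _ _).symm
    _ = ⊤ := by
      rw [Submodule.map_smul'', Submodule.map_top, LinearMap.range_eq_top.2 hp, hN,
        Submodule.comap_top]

lemma smul_top_ker_eq_top_of_projective [Module.Projective R N] (hp : Function.Surjective p)
    (hker : LinearMap.ker p ≤ I • (⊤ : Submodule R M)) :
    I • (⊤ : Submodule R (LinearMap.ker p)) = ⊤ := by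
  obtain ⟨s, hs⟩ := Module.projective_lifting_property p LinearMap.id hp
  have hretract (x : M) : x - s (p x) ∈ LinearMap.ker p := by
    rw [LinearMap.mem_ker, map_sub, sub_eq_zero]
    exact (LinearMap.congr_fun hs (p x)).symm
  let ρ : M →ₗ[R] LinearMap.ker p := (LinearMap.id - s ∘ₗ p).codRestrict _ hretract
  refine eq_top_iff.2 fun x _ ↦ ?_
  have hρx : ρ x = x := Subtype.ext (by simp [ρ])
  have hmem : ρ x ∈ (I • (⊤ : Submodule R M)).map ρ := Submodule.mem_map_of_mem (hker x.2)
  rw [Submodule.map_smul'', hρx] at hmem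
  exact Submodule.smul_mono le_rfl le_top hmem

end Retraction

section FreeModule

variable {R : Type u} [CommRing R] {I : Ideal R} {ι : Type v}

lemma mem_smul_top_of_forall_apply_mem {x : ι →₀ R} (h : ∀ i, x i ∈ I) :
    x ∈ I • (⊤ : Submodule R (ι →₀ R)) := by
  rw [← x.sum_single]
  refine Submodule.sum_mem _ fun i _ ↦ ?_
  rw [← mul_one (x i), ← smul_eq_mul, ← Finsupp.smul_single]
  exact Submodule.smul_mem_smul (h i) Submodule.mem_top

lemma isEmpty_of_smul_top_eq_top (hI : I ≠ ⊤) (h : I • (⊤ : Submodule R (ι →₀ R)) = ⊤) :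
    IsEmpty ι := by
  by_contra! hι
  obtain ⟨i⟩ := hι
  have hmap := congrArg (Submodule.map (Finsupp.lapply (R := R) i)) h
  rw [Submodule.map_smul'', Submodule.map_top,
    LinearMap.range_eq_top.2 (Finsupp.apply_surjective i), smul_eq_mul, Ideal.mul_top] at hmap
  exact hI hmap

end FreeModule

namespace MinimalFreeResolution

open MvPolynomial

variable {n : ℕ} {K : Type} [Field K] {M : Type} [AddCommGroup M]
  [Module (MvPolynomial (Fin n) K) M] (F : MinimalFreeResolution n K M)

/-- The resolution of the first syzygy module `ker ε` obtained by dropping degree `0`. -/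
noncomputable def tail : MinimalFreeResolution n K (LinearMap.ker F.ε) where
  b d := F.b (d + 1)
  φ d := F.φ (d + 1)
  ε := (F.φ 0).codRestrict _ fun x ↦ F.exact_zero ▸ LinearMap.mem_range_self _ x
  surj := by
    rintro ⟨x, hx⟩
    obtain ⟨y, rfl⟩ := F.exact_zero.le hx
    exact ⟨y, rfl⟩
  exact_zero := by rw [LinearMap.ker_codRestrict, F.exact_succ]
  exact_succ d := F.exact_succ (d + 1)
  minimal d := F.minimal (d + 1)

lemma ker_ε_le_smul_top :
    LinearMap.ker F.ε ≤ RingHom.ker (constantCoeff : MvPolynomial (Fin n) K →+* K) • ⊤ := by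
  rw [F.exact_zero]
  rintro _ ⟨x, rfl⟩
  induction x using Finsupp.induction_linear with
  | zero => simp
  | add x y hx hy => rw [map_add]; exact add_mem hx hy
  | single i r =>
    rw [← mul_one r, ← smul_eq_mul, ← Finsupp.smul_single, map_smul]
    exact Submodule.smul_mem _ r (mem_smul_top_of_forall_apply_mem (F.minimal 0 i))

lemma b_zero_eq_zero_of_smul_top_eq_top
    (h : RingHom.ker (constantCoeff : MvPolynomial (Fin n) K →+* K) •
      (⊤ : Submodule (MvPolynomial (Fin n) K) M) = ⊤) :
    F.b 0 = 0 :=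
  have := isEmpty_of_smul_top_eq_top (RingHom.ker_ne_top _)
    (smul_top_eq_top_of_ker_le F.surj F.ker_ε_le_smul_top h)
  by rwa [← Fintype.card_eq_zero_iff, Fintype.card_fin] at this

lemma subsingleton_of_b_zero_eq_zero (h : F.b 0 = 0) : Subsingleton M :=
  have : IsEmpty (Fin (F.b 0)) := Fintype.card_eq_zero_iff.1 (by rw [Fintype.card_fin, h])
  F.surj.subsingleton

lemma hasProjectiveDimensionLT_ker_ε_iff (d : ℕ) :
    HasProjectiveDimensionLT (ModuleCat.of (MvPolynomial (Fin n) K) (LinearMap.ker F.ε)) d ↔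
      HasProjectiveDimensionLT (ModuleCat.of (MvPolynomial (Fin n) K) M) (d + 1) := by
  cases d with
  | zero =>
    rw [hasProjectiveDimensionLT_zero_iff_isZero, ModuleCat.isZero_of_iff_subsingleton,
      zero_add, ← projective_iff_hasProjectiveDimensionLT_one, ← IsProjective.iff_projective]
    constructor
    · intro h
      have hinj : Function.Injective F.ε :=
        LinearMap.ker_eq_bot.1 (Submodule.subsingleton_iff_eq_bot.1 h)
      exact Module.Projective.of_equiv (LinearEquiv.ofBijective F.ε ⟨hinj, F.surj⟩)
    · intro h
      exact F.tail.subsingleton_of_b_zero_eq_zero (F.tail.b_zero_eq_zero_of_smul_top_eq_top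
        (smul_top_ker_eq_top_of_projective F.surj F.ker_ε_le_smul_top))
  | succ d =>
    exact ((LinearMap.shortExact_shortComplexKer F.surj).hasProjectiveDimensionLT_X₃_iff d
      ((IsProjective.iff_projective _).1 inferInstance)).symm

theorem b_eq_zero_iff (d : ℕ) :
    F.b d = 0 ↔ HasProjectiveDimensionLT (ModuleCat.of (MvPolynomial (Fin n) K) M) d := by
  induction d generalizing M with
  | zero =>
    rw [hasProjectiveDimensionLT_zero_iff_isZero, ModuleCat.isZero_of_iff_subsingleton]
    exact ⟨F.subsingleton_of_b_zero_eq_zero, fun _ ↦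
      F.b_zero_eq_zero_of_smul_top_eq_top (Subsingleton.elim _ _)⟩
  | succ d ih =>
    exact (ih F.tail).trans (F.hasProjectiveDimensionLT_ker_ε_iff d)

end MinimalFreeResolution

/-- For `n ≥ 4`, the projective dimension of `R/Jₙ` equals `n - 2`: any minimal free
resolution of `R/Jₙ` has a nonzero module in homological degree `n - 2` and zero
modules in all higher degrees. -/
theorem projdim_cycle (K : Type) [Field K] (n : ℕ) (hn : 4 ≤ n)
    (F : MinimalFreeResolution n K (MvPolynomial (Fin n) K ⧸ cycleIdeal n K)) :
    F.b (n - 2) ≠ 0 ∧ ∀ d : ℕ, n - 2 < d → F.b d = 0 := by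
  obtain ⟨hle, hlt⟩ := projectiveDimension_eq_natCast_iff.1
    (projectiveDimension_quotient_cycleIdeal (K := K) hn)
  refine ⟨fun h ↦ hlt ((F.b_eq_zero_iff (n - 2)).1 h), fun d hd ↦ (F.b_eq_zero_iff d).2 ?_⟩
  exact hasProjectiveDimensionLT_of_ge _ (n - 2 + 1) d hd
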